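/- There exist universal constants c, c' > 0 such that for every real p ≥ 1, every real α > 2, and every finite metric space (X,d) with n ≥ 2 points, there exist a real ψ with 0 < ψ ≤ 1 and ψ ≥ 1 − c·log α/α, a subset Y ⊆ X with |Y| ≥ n^ψ, and an α-embedding of Y into ℝ^D equipped with the ℓ_p norm, where D = ⌈⌈c'/(α−2)²⌉·ψ·log n⌉. -/

import Mathlib

/-!
Given `t ≥ 1`, an `n`-point metric space contains `n ^ (1 - 1 / t)` points on which the metric is
`O(t)`-equivalent to a tree metric. Around the point whose small ball is largest, one of `t`
consecutive shells is so thin that discarding it costs at most the factor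
`(|large ball| / |small ball|) ^ (1 / t)`; recursing on the ball inside the shell and on the points
outside it, these factors telescope to `n ^ (1 / t)`.

The tree on a set `Y` of points embeds with bounded distortion into `ℓ_p ^ D` for every `p ≥ 1` as
soon as `D ≥ log |Y|`. Each cluster of the tree is represented by one of its points, and the points
of `Y` label the words of a code of length `D` with relative distance `1 / 2` over a constant
alphabet. Coordinate `i` of the image of `x` is the number whose digits are the `i`-th letters of
the words of the clusters containing `x`. The top level at which two points are in different
clusters determines the size of at least half of the coordinates of their difference.

With `t` proportional to `α` this gives `ψ = 1 - O(1 / α)`; when that bound is not positive, two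
points suffice.
-/

open Finset

section HammingCodes

lemma exists_map_pairwise_not_of_card_mul_le {X V : Type*} [Fintype V] [Nonempty V]
    {r : V → V → Prop} [DecidableRel r] (hr : ∀ u v, r u v → r v u) {b : ℕ} (hb : 0 < b)
    (hball : ∀ u, #{v | r u v} ≤ b) {Y : Finset X} (hY : #Y * b ≤ Fintype.card V) :
    ∃ g : X → V, (Y : Set X).Pairwise fun x y => ¬ r (g x) (g y) := by
  classical
  induction Y using Finset.induction_on with
  | empty => exact ⟨fun _ => Classical.arbitrary V, by simp⟩
  | insert a Y ha ih =>
    rw [card_insert_of_notMem ha, add_one_mul] at hY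
    obtain ⟨g, hg⟩ := ih (by lia)
    have forbidden_card : #(Y.biUnion fun x => {v | r (g x) v}) < #(univ : Finset V) :=
      (card_biUnion_le_card_mul _ _ _ fun x _ => hball (g x)).trans_lt (by rw [card_univ]; lia)
    obtain ⟨v, -, hv⟩ := exists_mem_notMem_of_card_lt_card forbidden_card
    have hv : ∀ x ∈ Y, ¬ r (g x) v := by simpa using hv
    have hne : ∀ x ∈ Y, x ≠ a := fun x hx hxa => ha (hxa ▸ hx)
    refine ⟨Function.update g a v, ?_⟩
    rw [coe_insert]
    refine Set.Pairwise.insert (fun x hx y hy hxy => ?_) fun x hx _ => ?_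
    · simpa [hne x hx, hne y hy] using hg hx hy hxy
    · have hvx := hv x hx
      simpa [hne x hx] using ⟨fun h => hvx (hr _ _ h), hvx⟩

variable {ι A : Type*} [Fintype ι] [DecidableEq A] {m : ℕ}

lemma pow_card_le_prod_ite_of_two_mul_hammingDist_lt {x y : ι → A}
    (h : 2 * hammingDist x y < Fintype.card ι) (hm : 0 < m) :
    m ^ Fintype.card ι ≤ ∏ i, if x i = y i then m ^ 2 else 1 := by
  have agree_add_dist : #{i | x i = y i} + hammingDist x y = Fintype.card ι :=
    card_filter_add_card_filter_not (s := univ) fun i => x i = y i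
  rw [prod_ite, prod_const, prod_const_one, mul_one, ← pow_mul]
  exact Nat.pow_le_pow_right hm (by lia)

variable [Fintype A]

lemma sum_prod_ite_eq_le [DecidableEq ι] (hA : Fintype.card A = m ^ 2) (x : ι → A) :
    ∑ y : ι → A, ∏ i, (if x i = y i then m ^ 2 else 1) ≤ (2 * m ^ 2) ^ Fintype.card ι := by
  have coordinate_weight (i : ι) : ∑ a, (if x i = a then m ^ 2 else 1) ≤ 2 * m ^ 2 :=
    calc ∑ a, (if x i = a then m ^ 2 else 1) ≤ ∑ a, ((if x i = a then m ^ 2 else 0) + 1) :=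
          sum_le_sum fun a _ => by split_ifs <;> lia
      _ = 2 * m ^ 2 := by simp [sum_add_distrib, hA, two_mul]
  rw [← Fintype.prod_sum fun i a => if x i = a then m ^ 2 else 1, ← card_univ]
  exact prod_le_pow_card _ _ _ fun i _ => coordinate_weight i

/- The Markov inequality for the weight that counts a factor `m²` for each coordinate at which `y`
agrees with `x`. -/
lemma card_hammingBall_le [DecidableEq ι] (hA : Fintype.card A = m ^ 2) (hm : 0 < m)
    (x : ι → A) :
    #{y : ι → A | 2 * hammingDist x y < Fintype.card ι} ≤ (2 * m) ^ Fintype.card ι := by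
  refine le_of_mul_le_mul_right ?_ (pow_pos hm (Fintype.card ι))
  calc #{y : ι → A | 2 * hammingDist x y < Fintype.card ι} * m ^ Fintype.card ι
      ≤ ∑ y : ι → A with 2 * hammingDist x y < Fintype.card ι,
          ∏ i, (if x i = y i then m ^ 2 else 1) := by
        rw [← smul_eq_mul]
        exact card_nsmul_le_sum _ _ _ fun y hy =>
          pow_card_le_prod_ite_of_two_mul_hammingDist_lt (mem_filter.1 hy).2 hm
    _ ≤ ∑ y : ι → A, ∏ i, (if x i = y i then m ^ 2 else 1) :=
        sum_le_sum_of_subset (filter_subset _ _)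
    _ ≤ (2 * m ^ 2) ^ Fintype.card ι := sum_prod_ite_eq_le hA x
    _ = (2 * m) ^ Fintype.card ι * m ^ Fintype.card ι := by rw [← mul_pow]; ring

lemma exists_code_of_card_mul_le {X : Type*} {Y : Finset X} (hA : Fintype.card A = m ^ 2)
    (hm : 0 < m) (hY : #Y * 2 ^ Fintype.card ι ≤ m ^ Fintype.card ι) :
    ∃ code : X → ι → A, (Y : Set X).Pairwise fun x y =>
      Fintype.card ι ≤ 2 * hammingDist (code x) (code y) := by
  classical
  have : Nonempty A := Fintype.card_pos_iff.1 (hA ▸ pow_pos hm 2)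
  have card_words : #Y * (2 * m) ^ Fintype.card ι ≤ Fintype.card (ι → A) :=
    calc #Y * (2 * m) ^ Fintype.card ι
        = #Y * 2 ^ Fintype.card ι * m ^ Fintype.card ι := by rw [mul_pow, mul_assoc]
      _ ≤ m ^ Fintype.card ι * m ^ Fintype.card ι := Nat.mul_le_mul_right _ hY
      _ = Fintype.card (ι → A) := by rw [Fintype.card_fun, hA, ← mul_pow, sq]
  simpa only [not_lt] using exists_map_pairwise_not_of_card_mul_le
    (r := fun u v : ι → A => 2 * hammingDist u v < Fintype.card ι)
    (fun u v h => hammingDist_comm u v ▸ h) (by positivity) (card_hammingBall_le hA hm) card_words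

end HammingCodes

section DigitSums

/-- The real number with digits `c 0, …, c (J - 1) ∈ {0, …, q - 1}` in base `2q`, times `2q`.
The base is twice the number of digits so that the most significant position at which two
sequences differ dominates the contribution of all lower ones. -/
def digitSum {q : ℕ} (J : ℕ) (c : ℕ → Fin q) : ℝ :=
  ∑ j ∈ range J, (2 * q : ℝ) ^ (j + 1) * (c j : ℝ)

variable {q : ℕ}

lemma abs_fin_val_sub_le (a b : Fin q) : |(a : ℝ) - (b : ℝ)| ≤ q - 1 := by
  have val_le (d : Fin q) : (d : ℝ) ≤ q - 1 := by
    rw [le_sub_iff_add_le]; exact_mod_cast d.2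
  have ha := val_le a
  have hb := val_le b
  exact abs_sub_le_iff.2 ⟨by linarith [(b : ℕ).cast_nonneg (α := ℝ)],
    by linarith [(a : ℕ).cast_nonneg (α := ℝ)]⟩

lemma one_le_abs_fin_val_sub {a b : Fin q} (h : a ≠ b) : 1 ≤ |(a : ℝ) - (b : ℝ)| := by
  have : (a : ℤ) - (b : ℤ) ≠ 0 := sub_ne_zero.2 (by simpa [Fin.ext_iff] using h)
  exact_mod_cast Int.one_le_abs this

lemma sum_pow_mul_le_half_pow {b a : ℝ} (ha : 0 ≤ a) (hab : 2 * a + 1 ≤ b) (l : ℕ) :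
    ∑ j ∈ range l, b ^ (j + 1) * a ≤ b ^ (l + 1) / 2 := by
  have hb : 0 ≤ b := by linarith
  induction l with
  | zero => rw [sum_range_zero]; positivity
  | succ l ih =>
    calc ∑ j ∈ range (l + 1), b ^ (j + 1) * a ≤ b ^ (l + 1) / 2 + b ^ (l + 1) * a := by
          rw [sum_range_succ]; gcongr
      _ = b ^ (l + 1) * (2 * a + 1) / 2 := by ring
      _ ≤ b ^ (l + 1) * b / 2 := by gcongr
      _ = b ^ (l + 1 + 1) / 2 := by rw [← pow_succ]

variable {J l : ℕ} {c d : ℕ → Fin q}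

lemma abs_digitSum_sub_sub_top_le (hl : l < J) (h : ∀ j, l < j → c j = d j) :
    |digitSum J c - digitSum J d - (2 * q) ^ (l + 1) * ((c l : ℝ) - (d l : ℝ))| ≤
      (2 * q : ℝ) ^ (l + 1) / 2 := by
  have hq : (1 : ℝ) ≤ q := by exact_mod_cast (c 0).pos
  have higher_digits_cancel : digitSum J c - digitSum J d =
      ∑ j ∈ range (l + 1), (2 * q : ℝ) ^ (j + 1) * ((c j : ℝ) - (d j : ℝ)) := by
    simp only [digitSum, ← sum_sub_distrib, ← mul_sub]
    refine (sum_subset (range_subset_range.2 hl) fun j _ hj => ?_).symm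
    rw [h j (by simpa using hj), sub_self, mul_zero]
  rw [higher_digits_cancel, sum_range_succ, add_sub_cancel_right]
  calc |∑ j ∈ range l, (2 * q : ℝ) ^ (j + 1) * ((c j : ℝ) - (d j : ℝ))|
      ≤ ∑ j ∈ range l, |(2 * q : ℝ) ^ (j + 1) * ((c j : ℝ) - (d j : ℝ))| :=
        abs_sum_le_sum_abs _ _
    _ ≤ ∑ j ∈ range l, (2 * q : ℝ) ^ (j + 1) * (q - 1) := by
        refine sum_le_sum fun j _ => ?_
        rw [abs_mul, abs_of_nonneg (by positivity : (0 : ℝ) ≤ (2 * q : ℝ) ^ (j + 1))]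
        gcongr
        exact abs_fin_val_sub_le _ _
    _ ≤ (2 * q : ℝ) ^ (l + 1) / 2 := sum_pow_mul_le_half_pow (by linarith) (by linarith) l

lemma abs_digitSum_sub_le (hl : l < J) (h : ∀ j, l < j → c j = d j) :
    |digitSum J c - digitSum J d| ≤ q * (2 * q : ℝ) ^ (l + 1) := by
  have hpos : (0 : ℝ) ≤ (2 * q : ℝ) ^ (l + 1) := by positivity
  have top_le : |(2 * q : ℝ) ^ (l + 1) * ((c l : ℝ) - (d l : ℝ))| ≤
      (2 * q : ℝ) ^ (l + 1) * (q - 1) := by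
    rw [abs_mul, abs_of_nonneg hpos]
    gcongr
    exact abs_fin_val_sub_le _ _
  linarith [abs_digitSum_sub_sub_top_le hl h, abs_sub_abs_le_abs_sub (digitSum J c - digitSum J d)
    ((2 * q : ℝ) ^ (l + 1) * ((c l : ℝ) - (d l : ℝ)))]

lemma half_pow_le_abs_digitSum_sub (hl : l < J) (h : ∀ j, l < j → c j = d j) (hne : c l ≠ d l) :
    (2 * q : ℝ) ^ (l + 1) / 2 ≤ |digitSum J c - digitSum J d| := by
  have hpos : (0 : ℝ) ≤ (2 * q : ℝ) ^ (l + 1) := by positivity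
  have le_top : (2 * q : ℝ) ^ (l + 1) ≤ |(2 * q : ℝ) ^ (l + 1) * ((c l : ℝ) - (d l : ℝ))| := by
    rw [abs_mul, abs_of_nonneg hpos]
    exact le_mul_of_one_le_right hpos (one_le_abs_fin_val_sub hne)
  have close := abs_digitSum_sub_sub_top_le hl h
  rw [abs_sub_comm] at close
  linarith [abs_sub_abs_le_abs_sub ((2 * q : ℝ) ^ (l + 1) * ((c l : ℝ) - (d l : ℝ)))
    (digitSum J c - digitSum J d)]

end DigitSums

section LpDistance

/-- The `ℓ_p` distance `(∑ i, |u i - v i| ^ p) ^ (1 / p)` between two real vectors, for a real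
exponent `p`. -/
noncomputable def lpDist {ι : Type*} [Fintype ι] (p : ℝ) (u v : ι → ℝ) : ℝ :=
  (∑ i, |u i - v i| ^ p) ^ (1 / p)

/-- `Y` admits an `α`-embedding into `ℝ^ι` with the `ℓ_p` norm. The map is defined on the whole
ambient space, but only its restriction to `Y` is constrained. -/
def LpEmbeds {X : Type*} [PseudoMetricSpace X] (p α : ℝ) (ι : Type*) [Fintype ι]
    (Y : Finset X) : Prop :=
  ∃ f : X → ι → ℝ, ∃ s : ℝ, 0 < s ∧ ∀ x ∈ Y, ∀ y ∈ Y,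
    s * dist x y ≤ lpDist p (f x) (f y) ∧ lpDist p (f x) (f y) ≤ α * s * dist x y

variable {ι : Type*} [Fintype ι] {p : ℝ} {u v : ι → ℝ}

lemma lpDist_self (hp : 0 < p) (u : ι → ℝ) : lpDist p u u = 0 := by
  simp [lpDist, Real.zero_rpow hp.ne', hp.ne']

lemma mul_rpow_rpow_one_div {a n : ℝ} (hp : p ≠ 0) (ha : 0 ≤ a) (hn : 0 ≤ n) :
    (n * a ^ p) ^ (1 / p) = a * n ^ (1 / p) := by
  rw [Real.mul_rpow hn (by positivity), one_div, Real.rpow_rpow_inv ha hp, mul_comm]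

lemma lpDist_eq_of_forall_abs_sub_eq {a : ℝ} (hp : p ≠ 0) (ha : 0 ≤ a)
    (h : ∀ i, |u i - v i| = a) : lpDist p u v = a * (Fintype.card ι : ℝ) ^ (1 / p) := by
  simp only [lpDist, h, sum_const, card_univ, nsmul_eq_mul]
  exact mul_rpow_rpow_one_div hp ha (by positivity)

lemma lpDist_le_of_forall_abs_sub_le {U : ℝ} (hp : 0 < p) (hU : 0 ≤ U)
    (h : ∀ i, |u i - v i| ≤ U) : lpDist p u v ≤ U * (Fintype.card ι : ℝ) ^ (1 / p) := by
  rw [← mul_rpow_rpow_one_div hp.ne' hU (by positivity)]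
  refine Real.rpow_le_rpow (by positivity) ?_ (by positivity)
  calc ∑ i, |u i - v i| ^ p ≤ ∑ _i : ι, U ^ p := by gcongr with i; exact h i
    _ = Fintype.card ι * U ^ p := by rw [sum_const, card_univ, nsmul_eq_mul]

lemma half_mul_le_lpDist_of_card_le {L : ℝ} (hp : 1 ≤ p) (hL : 0 ≤ L)
    (h : Fintype.card ι ≤ 2 * #{i | L ≤ |u i - v i|}) :
    L / 2 * (Fintype.card ι : ℝ) ^ (1 / p) ≤ lpDist p u v := by
  have hp₀ : 0 < p := by linarith
  have hcard : (Fintype.card ι : ℝ) ≤ 2 * #{i | L ≤ |u i - v i|} := by exact_mod_cast h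
  have half_rpow_le : (L / 2) ^ p ≤ L ^ p / 2 := by
    rw [Real.div_rpow hL zero_le_two]
    gcongr
    exact Real.self_le_rpow_of_one_le one_le_two hp
  rw [← mul_rpow_rpow_one_div hp₀.ne' (by positivity) (by positivity)]
  refine Real.rpow_le_rpow (by positivity) ?_ (by positivity)
  calc Fintype.card ι * (L / 2) ^ p ≤ (2 * #{i | L ≤ |u i - v i|}) * (L ^ p / 2) := by gcongr
    _ = ∑ i with L ≤ |u i - v i|, L ^ p := by rw [sum_const, nsmul_eq_mul]; ring
    _ ≤ ∑ i with L ≤ |u i - v i|, |u i - v i| ^ p :=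
        sum_le_sum fun i hi => Real.rpow_le_rpow hL (mem_filter.1 hi).2 hp₀.le
    _ ≤ ∑ i, |u i - v i| ^ p :=
        sum_le_sum_of_subset_of_nonneg (filter_subset _ _) fun i _ _ => by positivity

variable {X : Type*} [PseudoMetricSpace X] {α β : ℝ} {Y : Finset X}

lemma LpEmbeds.mono_distortion (h : LpEmbeds p α ι Y) (hαβ : α ≤ β) : LpEmbeds p β ι Y := by
  obtain ⟨f, s, hs, hf⟩ := h
  refine ⟨f, s, hs, fun x hx y hy => ⟨(hf x hx y hy).1, (hf x hx y hy).2.trans ?_⟩⟩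
  gcongr

lemma lpEmbeds_pair [DecidableEq X] [Nonempty ι] (hp : p ≠ 0) (a b : X) :
    LpEmbeds p 1 ι {a, b} := by
  have dist_line : ∀ x ∈ ({a, b} : Finset X), ∀ y ∈ ({a, b} : Finset X),
      |dist x a - dist y a| = dist x y := by
    simp [dist_comm b a]
  refine ⟨fun x _ => dist x a, (Fintype.card ι : ℝ) ^ (1 / p), by positivity, fun x hx y hy => ?_⟩
  rw [lpDist_eq_of_forall_abs_sub_eq hp dist_nonneg fun _ => dist_line x hx y hy]
  constructor <;> linarith

end LpDistance

section UltrametricLevels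

/-- `lev` restricts to an ultrametric on `Y` with values in `{0, …, J}`: `lev x y` is the height of
the lowest common ancestor of the leaves `x` and `y` in a rooted tree of height `J` whose leaves
are the points of `Y`. -/
structure IsLevelOn {X : Type*} (lev : X → X → ℕ) (Y : Finset X) (J : ℕ) : Prop where
  eq_zero_iff : ∀ x ∈ Y, ∀ y ∈ Y, lev x y = 0 ↔ x = y
  symm : ∀ x ∈ Y, ∀ y ∈ Y, lev x y = lev y x
  le_max : ∀ x ∈ Y, ∀ y ∈ Y, ∀ z ∈ Y, lev x z ≤ max (lev x y) (lev y z)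
  le_height : ∀ x ∈ Y, ∀ y ∈ Y, lev x y ≤ J

/-- The distance of distinct points `x, y` of `Y` is `δ * b ^ lev x y` up to a factor `K`. Together
with `IsLevelOn` this says that `Y` is `K`-equivalent to a hierarchically well-separated tree. -/
def LevelApproximatesDist {X : Type*} [PseudoMetricSpace X] (δ b K : ℝ) (lev : X → X → ℕ)
    (Y : Finset X) : Prop :=
  ∀ x ∈ Y, ∀ y ∈ Y, x ≠ y → dist x y ≤ δ * b ^ lev x y ∧ δ * b ^ lev x y ≤ K * dist x y

/-- The levels of the tree obtained by joining a tree on `Y₁` and a tree on `Y₂` at a root of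
height `J`. -/
def joinLevel {X : Type*} [DecidableEq X] (Y₁ Y₂ : Finset X) (lev₁ lev₂ : X → X → ℕ) (J : ℕ)
    (x y : X) : ℕ :=
  if x ∈ Y₁ ∧ y ∈ Y₁ then lev₁ x y else if x ∈ Y₂ ∧ y ∈ Y₂ then lev₂ x y else J

variable {X : Type*} {lev lev₁ lev₂ : X → X → ℕ} {Y Y₁ Y₂ : Finset X} {J J₁ : ℕ}

lemma IsLevelOn.mono_set (h : IsLevelOn lev Y J) (hY : Y₁ ⊆ Y) : IsLevelOn lev Y₁ J where
  eq_zero_iff x hx y hy := h.eq_zero_iff x (hY hx) y (hY hy)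
  symm x hx y hy := h.symm x (hY hx) y (hY hy)
  le_max x hx y hy z hz := h.le_max x (hY hx) y (hY hy) z (hY hz)
  le_height x hx y hy := h.le_height x (hY hx) y (hY hy)

lemma IsLevelOn.mono_height (h : IsLevelOn lev Y J₁) (hJ : J₁ ≤ J) : IsLevelOn lev Y J :=
  { h with le_height := fun x hx y hy => (h.le_height x hx y hy).trans hJ }

lemma isLevelOn_zero (hY : (Y : Set X).Subsingleton) : IsLevelOn (fun _ _ => 0) Y J where
  eq_zero_iff x hx y hy := by simpa using hY hx hy
  symm _ _ _ _ := rfl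
  le_max _ _ _ _ _ _ := Nat.zero_le _
  le_height _ _ _ _ := Nat.zero_le _

lemma LevelApproximatesDist.mono_set [PseudoMetricSpace X] {δ b K : ℝ}
    (h : LevelApproximatesDist δ b K lev Y) (hY : Y₁ ⊆ Y) :
    LevelApproximatesDist δ b K lev Y₁ :=
  fun x hx y hy => h x (hY hx) y (hY hy)

section Join

variable [DecidableEq X]

lemma joinLevel_of_mem_left {x y : X} (hx : x ∈ Y₁) (hy : y ∈ Y₁) :
    joinLevel Y₁ Y₂ lev₁ lev₂ J x y = lev₁ x y :=
  if_pos ⟨hx, hy⟩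

lemma joinLevel_of_mem_right (hd : Disjoint Y₁ Y₂) {x y : X} (hx : x ∈ Y₂) (hy : y ∈ Y₂) :
    joinLevel Y₁ Y₂ lev₁ lev₂ J x y = lev₂ x y := by
  simp [joinLevel, hx, hy, disjoint_right.1 hd hx]

lemma joinLevel_of_mem_left_right (hd : Disjoint Y₁ Y₂) {x y : X} (hx : x ∈ Y₁) (hy : y ∈ Y₂) :
    joinLevel Y₁ Y₂ lev₁ lev₂ J x y = J := by
  simp [joinLevel, disjoint_left.1 hd hx, disjoint_right.1 hd hy]

lemma joinLevel_of_mem_right_left (hd : Disjoint Y₁ Y₂) {x y : X} (hx : x ∈ Y₂) (hy : y ∈ Y₁) :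
    joinLevel Y₁ Y₂ lev₁ lev₂ J x y = J := by
  simp [joinLevel, disjoint_left.1 hd hy, disjoint_right.1 hd hx]

lemma IsLevelOn.join (h₁ : IsLevelOn lev₁ Y₁ J) (h₂ : IsLevelOn lev₂ Y₂ J)
    (hd : Disjoint Y₁ Y₂) (hJ : 0 < J) :
    IsLevelOn (joinLevel Y₁ Y₂ lev₁ lev₂ J) (Y₁ ∪ Y₂) J := by
  have le_height : ∀ x ∈ Y₁ ∪ Y₂, ∀ y ∈ Y₁ ∪ Y₂, joinLevel Y₁ Y₂ lev₁ lev₂ J x y ≤ J := by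
    intro x hx y hy
    rcases mem_union.1 hx with hx | hx <;> rcases mem_union.1 hy with hy | hy
    · simpa only [joinLevel_of_mem_left hx hy] using h₁.le_height x hx y hy
    · exact (joinLevel_of_mem_left_right hd hx hy).le
    · exact (joinLevel_of_mem_right_left hd hx hy).le
    · simpa only [joinLevel_of_mem_right hd hx hy] using h₂.le_height x hx y hy
  refine ⟨fun x hx y hy => ?_, fun x hx y hy => ?_, fun x hx y hy z hz => ?_, le_height⟩
  · rcases mem_union.1 hx with hx | hx <;> rcases mem_union.1 hy with hy | hy
    · simpa only [joinLevel_of_mem_left hx hy] using h₁.eq_zero_iff x hx y hy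
    · simpa only [joinLevel_of_mem_left_right hd hx hy, hJ.ne', false_iff] using
        disjoint_iff_ne.1 hd x hx y hy
    · simpa only [joinLevel_of_mem_right_left hd hx hy, hJ.ne', false_iff] using
        (disjoint_iff_ne.1 hd y hy x hx).symm
    · simpa only [joinLevel_of_mem_right hd hx hy] using h₂.eq_zero_iff x hx y hy
  · rcases mem_union.1 hx with hx | hx <;> rcases mem_union.1 hy with hy | hy
    · simpa only [joinLevel_of_mem_left, hx, hy] using h₁.symm x hx y hy
    · rw [joinLevel_of_mem_left_right hd hx hy, joinLevel_of_mem_right_left hd hy hx]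
    · rw [joinLevel_of_mem_right_left hd hx hy, joinLevel_of_mem_left_right hd hy hx]
    · simpa only [joinLevel_of_mem_right hd, hx, hy] using h₂.symm x hx y hy
  · have hxz := le_height x hx z hz
    rcases mem_union.1 hx with hx | hx <;> rcases mem_union.1 hy with hy | hy
    · rcases mem_union.1 hz with hz | hz
      · simpa only [joinLevel_of_mem_left, hx, hy, hz] using h₁.le_max x hx y hy z hz
      · exact le_max_of_le_right (hxz.trans_eq (joinLevel_of_mem_left_right hd hy hz).symm)
    · exact le_max_of_le_left (hxz.trans_eq (joinLevel_of_mem_left_right hd hx hy).symm)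
    · exact le_max_of_le_left (hxz.trans_eq (joinLevel_of_mem_right_left hd hx hy).symm)
    · rcases mem_union.1 hz with hz | hz
      · exact le_max_of_le_right (hxz.trans_eq (joinLevel_of_mem_right_left hd hy hz).symm)
      · simpa only [joinLevel_of_mem_right hd, hx, hy, hz] using h₂.le_max x hx y hy z hz

lemma LevelApproximatesDist.join [PseudoMetricSpace X] {δ b K : ℝ}
    (h₁ : LevelApproximatesDist δ b K lev₁ Y₁) (h₂ : LevelApproximatesDist δ b K lev₂ Y₂)
    (hd : Disjoint Y₁ Y₂)
    (hcross : ∀ x ∈ Y₁, ∀ y ∈ Y₂, dist x y ≤ δ * b ^ J ∧ δ * b ^ J ≤ K * dist x y) :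
    LevelApproximatesDist δ b K (joinLevel Y₁ Y₂ lev₁ lev₂ J) (Y₁ ∪ Y₂) := by
  intro x hx y hy hxy
  rcases mem_union.1 hx with hx | hx <;> rcases mem_union.1 hy with hy | hy
  · rw [joinLevel_of_mem_left hx hy]
    exact h₁ x hx y hy hxy
  · rw [joinLevel_of_mem_left_right hd hx hy]
    exact hcross x hx y hy
  · rw [joinLevel_of_mem_right_left hd hx hy, dist_comm]
    exact hcross y hy x hx
  · rw [joinLevel_of_mem_right hd hx hy]
    exact h₂ x hx y hy hxy

end Join

lemma IsLevelOn.exists_representative (h : IsLevelOn lev Y J) :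
    ∃ rep : ℕ → X → X, ∀ j, (∀ x ∈ Y, rep j x ∈ Y) ∧
      ∀ x ∈ Y, ∀ y ∈ Y, rep j x = rep j y ↔ lev x y ≤ j := by
  rcases isEmpty_or_nonempty X with _ | _
  · exact ⟨fun _ => id, by simp⟩
  refine ⟨fun j x => Classical.epsilon fun z => z ∈ Y ∧ lev x z ≤ j, fun j => ?_⟩
  have rep_spec (x) (hx : x ∈ Y) := Classical.epsilon_spec (p := fun z => z ∈ Y ∧ lev x z ≤ j)
    ⟨x, hx, by simp [(h.eq_zero_iff x hx x hx).2 rfl]⟩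
  refine ⟨fun x hx => (rep_spec x hx).1, fun x hx y hy => ⟨fun hxy => ?_, fun hxy => ?_⟩⟩
  · have hz := rep_spec x hx
    have hyz := (rep_spec y hy).2
    simp only at hxy
    rw [← hxy, h.symm y hy _ hz.1] at hyz
    exact (h.le_max x hx _ hz.1 y hy).trans (max_le hz.2 hyz)
  · refine congrArg Classical.epsilon (funext fun z => propext ?_)
    refine and_congr_right fun hz => ⟨fun hxz => ?_, fun hyz => ?_⟩
    · exact (h.le_max y hy x hx z hz).trans (max_le (h.symm x hx y hy ▸ hxy) hxz)
    · exact (h.le_max x hx y hy z hz).trans (max_le hxy hyz)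

lemma IsLevelOn.exists_coordinates {ι : Type*} [Fintype ι] {m : ℕ} (h : IsLevelOn lev Y J)
    (hm : 0 < m) (hY : #Y * 2 ^ Fintype.card ι ≤ m ^ Fintype.card ι) :
    ∃ f : X → ι → ℝ, ∀ x ∈ Y, ∀ y ∈ Y, x ≠ y →
      (∀ i, |f x i - f y i| ≤ (m ^ 2 : ℕ) * (2 * (m ^ 2 : ℕ) : ℝ) ^ lev x y) ∧
      Fintype.card ι ≤ 2 * #{i | (2 * (m ^ 2 : ℕ) : ℝ) ^ lev x y / 2 ≤ |f x i - f y i|} := by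
  obtain ⟨code, hcode⟩ := exists_code_of_card_mul_le (ι := ι) (Fintype.card_fin (m ^ 2)) hm hY
  obtain ⟨rep, hrep⟩ := h.exists_representative
  refine ⟨fun x i => digitSum J fun j => code (rep j x) i, fun x hx y hy hxy => ?_⟩
  obtain ⟨l, hl⟩ := Nat.exists_eq_succ_of_ne_zero (mt (h.eq_zero_iff x hx y hy).1 hxy)
  have hlJ : l < J := Nat.lt_of_succ_le (hl ▸ h.le_height x hx y hy)
  have same_above (i : ι) (j : ℕ) (hj : l < j) : code (rep j x) i = code (rep j y) i := by
    rw [((hrep j).2 x hx y hy).2 (by lia)]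
  have differ_at : rep l x ≠ rep l y := fun heq => by
    have := ((hrep l).2 x hx y hy).1 heq
    lia
  rw [hl]
  refine ⟨fun i => abs_digitSum_sub_le hlJ (same_above i), ?_⟩
  refine (hcode ((hrep l).1 x hx) ((hrep l).1 y hy) differ_at).trans ?_
  gcongr
  exact card_le_card <| monotone_filter_right _ fun i _ hi =>
    half_pow_le_abs_digitSum_sub hlJ (same_above i) hi

lemma IsLevelOn.lpEmbeds [PseudoMetricSpace X] {ι : Type*} [Fintype ι] [Nonempty ι] {m : ℕ}
    {p δ K : ℝ} (h : IsLevelOn lev Y J)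
    (hdist : LevelApproximatesDist δ (2 * (m ^ 2 : ℕ)) K lev Y) (hp : 1 ≤ p) (hδ : 0 < δ)
    (hm : 0 < m) (hY : #Y * 2 ^ Fintype.card ι ≤ m ^ Fintype.card ι) :
    LpEmbeds p (4 * (m ^ 2 : ℕ) * K) ι Y := by
  obtain ⟨f, hf⟩ := h.exists_coordinates hm hY
  set q : ℕ := m ^ 2
  set N : ℝ := (Fintype.card ι : ℝ) ^ (1 / p)
  have hN : 0 < N := by positivity
  refine ⟨f, N / (4 * δ), by positivity, fun x hx y hy => ?_⟩
  rcases eq_or_ne x y with rfl | hxy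
  · simp [lpDist_self (by linarith : 0 < p)]
  obtain ⟨dist_le, le_dist⟩ := hdist x hx y hy hxy
  obtain ⟨coord_le, le_coord⟩ := hf x hx y hy hxy
  constructor
  · calc N / (4 * δ) * dist x y ≤ N / (4 * δ) * (δ * (2 * q) ^ lev x y) := by gcongr
      _ = (2 * q) ^ lev x y / 2 / 2 * N := by field_simp; ring
      _ ≤ lpDist p (f x) (f y) := half_mul_le_lpDist_of_card_le hp (by positivity) le_coord
  · calc lpDist p (f x) (f y) ≤ q * (2 * q) ^ lev x y * N :=
          lpDist_le_of_forall_abs_sub_le (by linarith) (by positivity) coord_le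
      _ = q * N / δ * (δ * (2 * q) ^ lev x y) := by field_simp
      _ ≤ q * N / δ * (K * dist x y) := by gcongr
      _ = 4 * q * K * (N / (4 * δ)) * dist x y := by field_simp

end UltrametricLevels

section BallCarving

lemma exists_succ_le_rpow_mul {u : ℕ → ℝ} (hu : ∀ i, 0 < u i) {t : ℕ} (ht : 0 < t) :
    ∃ i < t, u (i + 1) ≤ (u t / u 0) ^ (t⁻¹ : ℝ) * u i := by
  by_contra! growth
  have ratio_pos : 0 ≤ u t / u 0 := (div_pos (hu t) (hu 0)).le
  have total_growth := geom_lt (by positivity) ht growth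
  rw [Real.rpow_inv_natCast_pow ratio_pos ht.ne', div_mul_cancel₀ _ (hu 0).ne'] at total_growth
  exact lt_irrefl _ total_growth

/-- The points of `Z` at distance at most `r` from `x`. -/
noncomputable def ballIn {X : Type*} [PseudoMetricSpace X] (Z : Finset X) (x : X) (r : ℝ) :
    Finset X :=
  {y ∈ Z | dist x y ≤ r}

/-- Up to a loss factor `S` in cardinality, the metric on `Z` is `K`-equivalent to a tree metric
of height `J` with scale `δ` and base `b`. -/
def HasLevelSubset {X : Type*} [PseudoMetricSpace X] (δ b K : ℝ) (Z : Finset X) (J : ℕ)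
    (S : ℝ) : Prop :=
  ∃ Y ⊆ Z, ∃ lev : X → X → ℕ, IsLevelOn lev Y J ∧ LevelApproximatesDist δ b K lev Y ∧
    (#Z : ℝ) ≤ #Y * S

variable {X : Type*} [PseudoMetricSpace X] {Z C W : Finset X} {x y : X} {t : ℕ}

@[simp]
lemma mem_ballIn {r : ℝ} : y ∈ ballIn Z x r ↔ y ∈ Z ∧ dist x y ≤ r :=
  mem_filter

lemma ballIn_subset (Z : Finset X) (x : X) (r : ℝ) : ballIn Z x r ⊆ Z :=
  filter_subset _ _

lemma ballIn_mono (h : C ⊆ Z) (x : X) (r : ℝ) : ballIn C x r ⊆ ballIn Z x r :=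
  filter_subset_filter _ h

lemma ballIn_nonempty (hx : x ∈ Z) {r : ℝ} (hr : 0 ≤ r) : (ballIn Z x r).Nonempty :=
  ⟨x, by simp [hx, hr]⟩

lemma exists_radius_card_ballIn_le (hx : x ∈ Z) {r R : ℝ} (hr : 0 ≤ r) (hrR : r ≤ R)
    (ht : 0 < t) :
    ∃ ρ, r ≤ ρ ∧ ρ + (R - r) / t ≤ R ∧ (#(ballIn Z x (ρ + (R - r) / t)) : ℝ) ≤
      #(ballIn Z x ρ) * (#(ballIn Z x R) / #(ballIn Z x r) : ℝ) ^ (t⁻¹ : ℝ) := by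
  set gap : ℝ := (R - r) / t
  have gap_nonneg : 0 ≤ gap := div_nonneg (by linarith) (by positivity)
  have t_mul_gap : t * gap = R - r := mul_div_cancel₀ _ (by positivity)
  obtain ⟨i, hit, hi⟩ := exists_succ_le_rpow_mul (u := fun i => (#(ballIn Z x (r + i * gap)) : ℝ))
    (fun i => by exact_mod_cast (ballIn_nonempty hx (by positivity)).card_pos) ht
  have hi_succ : r + i * gap + gap = r + (i + 1 : ℕ) * gap := by push_cast; ring
  refine ⟨r + i * gap, by linarith [mul_nonneg i.cast_nonneg gap_nonneg], ?_, ?_⟩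
  · rw [hi_succ]
    have : ((i + 1 : ℕ) : ℝ) * gap ≤ t * gap := by gcongr; exact hit
    linarith
  · simp only [t_mul_gap, add_sub_cancel, CharP.cast_eq_zero, zero_mul, add_zero] at hi
    rw [hi_succ]
    linarith

/- The centre is chosen to maximise the number of points in its ball of radius `r`, which then
bounds the balls of radius `r` inside the core as well. -/
lemma exists_core_and_remainder (hZ : Z.Nonempty) {r Δ M : ℝ} (hr : 0 ≤ r) (hrΔ : r ≤ Δ / 4)
    (ht : 0 < t) (hM : ∀ x ∈ Z, (#(ballIn Z x (Δ / 2)) : ℝ) ≤ M) :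
    ∃ C ⊆ Z, ∃ W ⊂ Z, (∀ x ∈ C, ∀ y ∈ C, dist x y ≤ Δ) ∧
      (∀ x ∈ C, ∀ y ∈ W, Δ ≤ 4 * t * dist x y) ∧
      ∃ M₀ : ℝ, 1 ≤ M₀ ∧ (∀ x ∈ C, (#(ballIn C x r) : ℝ) ≤ M₀) ∧
        (#Z : ℝ) ≤ #C * (M / M₀) ^ (t⁻¹ : ℝ) + #W := by
  classical
  obtain ⟨x, hx, hmax⟩ := exists_max_image Z (fun x => #(ballIn Z x r)) hZ
  obtain ⟨ρ, hrρ, hρR, hgrowth⟩ :=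
    exists_radius_card_ballIn_le hx hr (by linarith : r ≤ Δ / 2) ht
  set gap : ℝ := (Δ / 2 - r) / t
  have le_gap : Δ ≤ 4 * t * gap := by
    have : t * gap = Δ / 2 - r := mul_div_cancel₀ _ (by positivity)
    linarith
  have gap_nonneg : 0 ≤ gap := div_nonneg (by linarith) (by positivity)
  have outer_subset := ballIn_subset Z x (ρ + gap)
  refine ⟨ballIn Z x ρ, ballIn_subset Z x ρ, Z \ ballIn Z x (ρ + gap),
    sdiff_ssubset outer_subset (ballIn_nonempty hx (by linarith)), ?_, ?_,
    #(ballIn Z x r), ?_, ?_, ?_⟩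
  · intro y hy z hz
    linarith [dist_triangle_left y z x, (mem_ballIn.1 hy).2, (mem_ballIn.1 hz).2]
  · intro y hy z hz
    have hxz : ρ + gap < dist x z := by
      simpa [(mem_sdiff.1 hz).1] using (mem_sdiff.1 hz).2
    have gap_le_dist : gap ≤ dist y z := by linarith [dist_triangle x y z, (mem_ballIn.1 hy).2]
    exact le_gap.trans (by gcongr)
  · exact_mod_cast (ballIn_nonempty hx hr).card_pos
  · intro y hy
    exact_mod_cast (card_le_card (ballIn_mono (ballIn_subset Z x ρ) y r)).trans
      (hmax y (ballIn_subset Z x ρ hy))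
  · calc (#Z : ℝ) = #(ballIn Z x (ρ + gap)) + #(Z \ ballIn Z x (ρ + gap)) := by
          rw [add_comm]; exact_mod_cast (card_sdiff_add_card_eq_card outer_subset).symm
      _ ≤ #(ballIn Z x ρ) * (M / #(ballIn Z x r)) ^ (t⁻¹ : ℝ) +
            #(Z \ ballIn Z x (ρ + gap)) := by
          gcongr
          refine hgrowth.trans ?_
          gcongr
          exact hM x hx

lemma HasLevelSubset.join {δ b K S S₁ θ : ℝ} {J : ℕ} (hC : HasLevelSubset δ b K C J S₁)
    (hW : HasLevelSubset δ b K W (J + 1) S) (hCZ : C ⊆ Z) (hWZ : W ⊆ Z) (hCW : Disjoint C W)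
    (hcross : ∀ x ∈ C, ∀ y ∈ W, dist x y ≤ δ * b ^ (J + 1) ∧ δ * b ^ (J + 1) ≤ K * dist x y)
    (hθ : 0 ≤ θ) (hS : S₁ * θ ≤ S) (hcard : (#Z : ℝ) ≤ #C * θ + #W) :
    HasLevelSubset δ b K Z (J + 1) S := by
  classical
  obtain ⟨Y₁, hY₁, lev₁, hlev₁, happrox₁, hcard₁⟩ := hC
  obtain ⟨Y₂, hY₂, lev₂, hlev₂, happrox₂, hcard₂⟩ := hW
  have hd : Disjoint Y₁ Y₂ := disjoint_of_subset_left hY₁ (disjoint_of_subset_right hY₂ hCW)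
  refine ⟨Y₁ ∪ Y₂, union_subset (hY₁.trans hCZ) (hY₂.trans hWZ),
    joinLevel Y₁ Y₂ lev₁ lev₂ (J + 1), (hlev₁.mono_height J.le_succ).join hlev₂ hd J.succ_pos,
    happrox₁.join happrox₂ hd fun x hx y hy => hcross x (hY₁ hx) y (hY₂ hy), ?_⟩
  calc (#Z : ℝ) ≤ #C * θ + #W := hcard
    _ ≤ #Y₁ * S₁ * θ + #Y₂ * S := by gcongr
    _ = #Y₁ * (S₁ * θ) + #Y₂ * S := by ring
    _ ≤ #Y₁ * S + #Y₂ * S := by gcongr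
    _ = #(Y₁ ∪ Y₂) * S := by rw [card_union_of_disjoint hd]; push_cast; ring

lemma HasLevelSubset.exists_isLevelOn_card_eq {δ b K S : ℝ} {J N : ℕ}
    (h : HasLevelSubset δ b K Z J S) (hS : 0 < S) (hN : N ≤ ⌈(#Z : ℝ) / S⌉₊) :
    ∃ Y : Finset X, #Y = N ∧ ∃ lev, IsLevelOn lev Y J ∧ LevelApproximatesDist δ b K lev Y := by
  obtain ⟨Y, -, lev, hlev, happrox, hcard⟩ := h
  have hNY : N ≤ #Y := hN.trans (Nat.ceil_le.2 ((div_le_iff₀ hS).2 hcard))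
  obtain ⟨Y', hY', rfl⟩ := exists_subset_card_eq hNY
  exact ⟨Y', rfl, lev, hlev.mono_set hY', happrox.mono_set hY'⟩

lemma hasLevelSubset_of_subsingleton {δ b K S : ℝ} {J : ℕ} (hZ : (Z : Set X).Subsingleton)
    (hS : 1 ≤ S) : HasLevelSubset δ b K Z J S :=
  ⟨Z, Subset.rfl, fun _ _ => 0, isLevelOn_zero hZ,
    fun _ hx _ hy hxy => absurd (hZ hx hy) hxy, le_mul_of_one_le_right (by positivity) hS⟩

/- The ball counts telescope: the loss `M₀ ^ (1 / t)` on the core cancels against the loss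
`(M / M₀) ^ (1 / t)` incurred by discarding the shell around it. -/
lemma hasLevelSubset_of_card_ballIn_le {δ b : ℝ} (hδ : 0 < δ) (hb : 2 ≤ b) (ht : 0 < t)
    (J : ℕ) (Z : Finset X) (hsep : (Z : Set X).Pairwise fun x y => δ < dist x y)
    (hdiam : ∀ x ∈ Z, ∀ y ∈ Z, dist x y ≤ δ * b ^ J) {M : ℝ} (hM : 1 ≤ M)
    (hball : ∀ x ∈ Z, (#(ballIn Z x (δ * b ^ J / (2 * b))) : ℝ) ≤ M) :
    HasLevelSubset δ b (4 * b * t) Z J (M ^ (t⁻¹ : ℝ)) := by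
  have one_le_loss {M : ℝ} (hM : 1 ≤ M) : 1 ≤ M ^ (t⁻¹ : ℝ) := Real.one_le_rpow hM (by positivity)
  induction J generalizing Z M with
  | zero =>
    refine hasLevelSubset_of_subsingleton (fun x hx y hy => ?_) (one_le_loss hM)
    by_contra hxy
    have := hsep hx hy hxy
    have := hdiam x hx y hy
    linarith
  | succ J ihJ =>
    induction Z using Finset.strongInduction with
    | H Z ihZ =>
    rcases Z.eq_empty_or_nonempty with rfl | hZ
    · exact hasLevelSubset_of_subsingleton (by simp) (one_le_loss hM)
    have hscale : δ * b ^ (J + 1) / (2 * b) = δ * b ^ J / 2 := by rw [pow_succ]; field_simp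
    have hsmall : δ * b ^ J / (2 * b) ≤ δ * b ^ J / 4 := by gcongr; linarith
    obtain ⟨C, hCZ, W, hWZ, hCdiam, hgap, M₀, hM₀, hCball, hcard⟩ :=
      exists_core_and_remainder hZ (by positivity) hsmall ht (by simpa only [hscale] using hball)
    have core := ihJ C (hsep.mono hCZ) hCdiam hM₀ hCball
    have remainder := ihZ W hWZ (hsep.mono hWZ.1)
      (fun x hx y hy => hdiam x (hWZ.1 hx) y (hWZ.1 hy))
      fun x hx => (Nat.cast_le.2 (card_le_card (ballIn_mono hWZ.1 x _))).trans (hball x (hWZ.1 hx))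
    refine core.join remainder hCZ hWZ.1 ?_ (fun x hx y hy => ⟨hdiam x (hCZ hx) y (hWZ.1 hy), ?_⟩)
      (by positivity) (le_of_eq ?_) hcard
    · exact disjoint_left.2 fun x hxC hxW => by
        have hpos : 0 < δ * b ^ J := by positivity
        exact hpos.not_ge (by simpa using hgap x hxC x hxW)
    · calc δ * b ^ (J + 1) = b * (δ * b ^ J) := by ring
        _ ≤ b * (4 * t * dist x y) := mul_le_mul_of_nonneg_left (hgap x hx y hy) (by linarith)
        _ = 4 * b * t * dist x y := by ring
    · rw [← Real.mul_rpow (by positivity) (by positivity), mul_div_cancel₀ _ (by positivity)]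

end BallCarving

section LowDimension

variable {X : Type*} [MetricSpace X]

lemma exists_hasLevelSubset {Z : Finset X} (hZ : Z.Nontrivial) {b : ℝ} (hb : 2 ≤ b) {t : ℕ}
    (ht : 0 < t) :
    ∃ δ > 0, ∃ J, HasLevelSubset δ b (4 * b * t) Z J ((#Z : ℝ) ^ (t⁻¹ : ℝ)) := by
  have infsep_pos : 0 < (Z : Set X).infsep := Z.infsep_pos_iff_nontrivial.2 hZ
  set δ : ℝ := (Z : Set X).infsep / 2
  have hδ : 0 < δ := half_pos infsep_pos
  obtain ⟨J, hJ⟩ := pow_unbounded_of_one_lt (Metric.diam (Z : Set X) / δ) (by linarith : 1 < b)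
  rw [div_lt_iff₀' hδ] at hJ
  refine ⟨δ, hδ, J, hasLevelSubset_of_card_ballIn_le hδ hb ht J Z ?_ ?_ ?_ ?_⟩
  · exact fun x hx y hy hxy =>
      (half_lt_self infsep_pos).trans_le (Set.infsep_le_dist_of_mem hx hy hxy)
  · exact fun x hx y hy =>
      (Metric.dist_le_diam_of_mem Z.finite_toSet.isBounded hx hy).trans hJ.le
  · exact_mod_cast hZ.nonempty.card_pos
  · exact fun x _ => Nat.cast_le.2 (card_le_card (ballIn_subset Z x _))

lemma natCeil_rpow_le_four_pow {n ψ : ℝ} {D : ℕ} (hn : 0 < n) (hD : ψ * Real.log n ≤ D) :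
    ⌈n ^ ψ⌉₊ ≤ 4 ^ D := by
  rw [Nat.ceil_le]
  calc n ^ ψ = Real.exp (ψ * Real.log n) := by rw [Real.rpow_def_of_pos hn, mul_comm]
    _ ≤ Real.exp D := Real.exp_le_exp.2 hD
    _ = Real.exp 1 ^ D := (Real.exp_one_pow D).symm
    _ ≤ 4 ^ D := by gcongr; linarith [Real.exp_one_lt_three]
    _ = (4 ^ D : ℕ) := by push_cast; rfl

lemma exists_lpEmbeds_of_le_one_sub_inv {Z : Finset X} (hZ : Z.Nontrivial) {p ψ : ℝ} {t : ℕ}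
    (hp : 1 ≤ p) (ht : 0 < t) (hψ₀ : 0 < ψ) (hψ : ψ ≤ 1 - (t : ℝ)⁻¹) :
    ∃ Y : Finset X, (#Z : ℝ) ^ ψ ≤ #Y ∧
      ∀ D : ℕ, ψ * Real.log #Z ≤ D → LpEmbeds p (131072 * t) (Fin D) Y := by
  have one_lt_card : (1 : ℝ) < #Z := by exact_mod_cast one_lt_card_iff_nontrivial.2 hZ
  have card_pos : (0 : ℝ) < #Z := one_pos.trans one_lt_card
  -- Alphabet `{0, …, 8² - 1}`, hence base `2 · 8²`: this gives `(8 / 2) ^ D ≥ e ^ D` code words.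
  obtain ⟨δ, hδ, J, hlevel⟩ :=
    exists_hasLevelSubset hZ (b := 2 * (8 ^ 2 : ℕ)) (by norm_num) ht
  have ceil_le : ⌈(#Z : ℝ) ^ ψ⌉₊ ≤ ⌈(#Z : ℝ) / (#Z : ℝ) ^ (t⁻¹ : ℝ)⌉₊ := by
    rw [← Real.rpow_one_sub' card_pos.le (by linarith)]
    exact Nat.ceil_mono (Real.rpow_le_rpow_of_exponent_le one_lt_card.le hψ)
  obtain ⟨Y, hYcard, lev, hlev, happrox⟩ :=
    hlevel.exists_isLevelOn_card_eq (by positivity) ceil_le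
  refine ⟨Y, hYcard ▸ Nat.le_ceil _, fun D hD => ?_⟩
  have : NeZero D := ⟨by
    rintro rfl
    exact (mul_pos hψ₀ (Real.log_pos one_lt_card)).not_ge (by simpa using hD)⟩
  refine (hlev.lpEmbeds happrox hp hδ (by norm_num) ?_).mono_distortion (le_of_eq ?_)
  · calc #Y * 2 ^ Fintype.card (Fin D) ≤ 4 ^ D * 2 ^ D := by
          rw [hYcard, Fintype.card_fin]
          exact Nat.mul_le_mul_right _ (natCeil_rpow_le_four_pow card_pos hD)
      _ = 8 ^ Fintype.card (Fin D) := by rw [← mul_pow, Fintype.card_fin]; norm_num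
  · push_cast; ring

lemma exists_lpEmbeds_two_points {Z : Finset X} (hZ : Z.Nontrivial) {p : ℝ} (hp : p ≠ 0) :
    ∃ ψ : ℝ, 0 < ψ ∧ ψ ≤ 1 ∧ ∃ Y : Finset X, (#Z : ℝ) ^ ψ ≤ #Y ∧
      ∀ D : ℕ, ψ * Real.log #Z ≤ D → LpEmbeds p 1 (Fin D) Y := by
  classical
  have two_le_card : (2 : ℝ) ≤ #Z := by exact_mod_cast one_lt_card_iff_nontrivial.2 hZ
  have one_lt_card : (1 : ℝ) < #Z := one_lt_two.trans_le two_le_card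
  have logb_pos : 0 < Real.logb #Z 2 := Real.logb_pos one_lt_card one_lt_two
  obtain ⟨a, -, b, -, hab⟩ := hZ
  refine ⟨Real.logb #Z 2, logb_pos, ?_, {a, b}, ?_, fun D hD => ?_⟩
  · rwa [Real.logb_le_iff_le_rpow one_lt_card two_pos, Real.rpow_one]
  · rw [Real.rpow_logb (by linarith) one_lt_card.ne' two_pos, card_pair hab, Nat.cast_ofNat]
  · have : NeZero D := ⟨by
      rintro rfl
      exact (mul_pos logb_pos (Real.log_pos one_lt_card)).not_ge (by simpa using hD)⟩
    exact lpEmbeds_pair hp a b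

lemma exists_nat_mul_le_and_inv_le {a α : ℝ} (ha : 0 < a) (hα : a ≤ α) :
    ∃ t : ℕ, 0 < t ∧ a * t ≤ α ∧ (t : ℝ)⁻¹ ≤ 2 * a / α := by
  have one_le_ratio : 1 ≤ α / a := (one_le_div ha).2 hα
  have floor_pos : 0 < ⌊α / a⌋₊ := Nat.floor_pos.2 one_le_ratio
  refine ⟨⌊α / a⌋₊, floor_pos, ?_, ?_⟩
  · rw [← le_div_iff₀' ha]
    exact Nat.floor_le (by positivity)
  · have one_le_floor : (1 : ℝ) ≤ ⌊α / a⌋₊ := by exact_mod_cast floor_pos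
    have half_le_floor : α / a / 2 ≤ ⌊α / a⌋₊ := by
      linarith [Nat.lt_floor_add_one (α / a)]
    calc (⌊α / a⌋₊ : ℝ)⁻¹ ≤ (α / a / 2)⁻¹ := by gcongr
      _ = 2 * a / α := by rw [div_div, inv_div, mul_comm]

theorem ramsey_low_dimension_general [Fintype X] (hX : 2 ≤ Fintype.card X) {p α : ℝ}
    (hp : 1 ≤ p) (hα : 1 ≤ α) :
    ∃ ψ : ℝ, 0 < ψ ∧ ψ ≤ 1 ∧ 1 - 262144 / α ≤ ψ ∧ ∃ Y : Finset X,
      (Fintype.card X : ℝ) ^ ψ ≤ #Y ∧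
        ∀ D : ℕ, ψ * Real.log (Fintype.card X) ≤ D → LpEmbeds p α (Fin D) Y := by
  have univ_nontrivial : (univ : Finset X).Nontrivial := one_lt_card_iff_nontrivial.1 hX
  rcases le_or_gt (1 - 262144 / α) 0 with hψ | hψ
  · obtain ⟨ψ, hψ₀, hψ₁, Y, hY, hemb⟩ :=
      exists_lpEmbeds_two_points univ_nontrivial (by linarith : p ≠ 0)
    exact ⟨ψ, hψ₀, hψ₁, hψ.trans hψ₀.le, Y, hY, fun D hD => (hemb D hD).mono_distortion hα⟩
  · have hα_large : 262144 < α := (div_lt_one (by positivity)).1 (sub_pos.1 hψ)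
    obtain ⟨t, ht, ht_le, inv_le⟩ :=
      exists_nat_mul_le_and_inv_le (a := 131072) (by norm_num) (by linarith : _ ≤ α)
    norm_num only at inv_le
    obtain ⟨Y, hY, hemb⟩ :=
      exists_lpEmbeds_of_le_one_sub_inv univ_nontrivial hp ht hψ (by linarith)
    exact ⟨1 - 262144 / α, hψ, sub_le_self _ (by positivity), le_rfl, Y, hY,
      fun D hD => (hemb D hD).mono_distortion ht_le⟩

end LowDimension

lemma one_sub_mul_log_div_le {α c : ℝ} (hα : 2 ≤ α) (hc : 0 ≤ c) :
    1 - c / Real.log 2 * Real.log α / α ≤ 1 - c / α := by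
  have log_two_pos : 0 < Real.log 2 := Real.log_pos one_lt_two
  gcongr
  calc c = c / Real.log 2 * Real.log 2 := (div_mul_cancel₀ _ log_two_pos.ne').symm
    _ ≤ c / Real.log 2 * Real.log α := by gcongr

lemma mul_le_natCeil_natCeil_mul_mul {a ψ L : ℝ} (ha : 0 < a) (hψ : 0 ≤ ψ) (hL : 0 ≤ L) :
    ψ * L ≤ ⌈(⌈a⌉₊ : ℝ) * ψ * L⌉₊ := by
  have one_le_ceil : (1 : ℝ) ≤ ⌈a⌉₊ := by exact_mod_cast Nat.ceil_pos.2 ha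
  calc ψ * L ≤ ⌈a⌉₊ * (ψ * L) := le_mul_of_one_le_left (by positivity) one_le_ceil
    _ = ⌈a⌉₊ * ψ * L := (mul_assoc _ _ _).symm
    _ ≤ ⌈(⌈a⌉₊ : ℝ) * ψ * L⌉₊ := Nat.le_ceil _

/-- Ramsey-type theorem with low dimension: every `n`-point metric space contains a
subset of size `n^ψ`, with `ψ ≥ 1 - c·log α/α`, which `α`-embeds into `ℝ^D` with the
`ℓ_p` norm, where `D = ⌈⌈c'/(α-2)²⌉·ψ·log n⌉`. -/
theorem ramsey_low_dimension :
    ∃ c c' : ℝ, 0 < c ∧ 0 < c' ∧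
      ∀ (p α : ℝ), 1 ≤ p → 2 < α →
        ∀ (X : Type) [MetricSpace X] [Fintype X], 2 ≤ Fintype.card X →
          ∃ ψ : ℝ, 0 < ψ ∧ ψ ≤ 1 ∧ 1 - c * Real.log α / α ≤ ψ ∧
            ∃ Y : Finset X,
              (Fintype.card X : ℝ) ^ ψ ≤ (Y.card : ℝ) ∧
              ∃ f : X →
                  (Fin ⌈(⌈c' / (α - 2) ^ 2⌉₊ : ℝ) * ψ * Real.log (Fintype.card X)⌉₊ → ℝ),
                ∃ s : ℝ, 0 < s ∧
                  ∀ x ∈ Y, ∀ y ∈ Y,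
                    s * dist x y ≤ (∑ i, |f x i - f y i| ^ p) ^ (1 / p) ∧
                    (∑ i, |f x i - f y i| ^ p) ^ (1 / p) ≤ α * s * dist x y := by
  refine ⟨262144 / Real.log 2, 1, by positivity, one_pos, fun p α hp hα X _ _ hX => ?_⟩
  obtain ⟨ψ, hψ₀, hψ₁, hψ, Y, hY, hemb⟩ := ramsey_low_dimension_general hX hp (by linarith)
  exact ⟨ψ, hψ₀, hψ₁, (one_sub_mul_log_div_le hα.le (by norm_num)).trans hψ, Y, hY,
    hemb _ (mul_le_natCeil_natCeil_mul_mul (one_div_pos.2 (pow_pos (sub_pos.2 hα) 2)) hψ₀.le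
      (by positivity))⟩
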